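/- arXiv:2103.11523 — 2 statements merged into one kernel-verified Lean document; each statement's English description precedes it below -/
import Mathlib

section
/- Let n ≥ 2 and let V ⊆ ℂⁿ be a complex algebraic set, i.e., the common zero locus in ℂⁿ of an ideal I of the polynomial ring ℂ[x₁, …, xₙ]. Suppose V lies in an algebraic region of type (k, n): there exist complementary complex linear subspaces V₁, V₂ of ℂⁿ with dim V₁ = k, dim V₂ = n − k, and positive reals A, B such that every z ∈ V satisfies ‖z''‖ ≤ A(1 + ‖z'‖)^B, where z = z' + z'' with z' ∈ V₁, z'' ∈ V₂. Then dim V ≤ k, where dim V is the Krull dimension of the coordinate ring ℂ[x₁, …, xₙ]/I(V) and I(V) is the vanishing ideal of V. -/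
/-- The vanishing ideal of a subset `S ⊆ ℂⁿ`: all polynomials in
`ℂ[x₁, …, xₙ]` vanishing identically on `S`. -/
noncomputable def vanishingIdeal (n : ℕ) (S : Set (EuclideanSpace ℂ (Fin n))) :
    Ideal (MvPolynomial (Fin n) ℂ) where
  carrier := {f | ∀ z ∈ S, MvPolynomial.eval (fun i => z i) f = 0}
  zero_mem' := by intro z _; simp
  add_mem' := by intro f g hf hg z hz; simp [hf z hz, hg z hz]
  smul_mem' := by intro c f hf z hz; simp [smul_eq_mul, hf z hz]

/-- The dimension of a subset `S ⊆ ℂⁿ`: the Krull dimension of the coordinate ring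
`ℂ[x₁, …, xₙ] / I(S)`, where `I(S)` is the vanishing ideal of `S`. -/
noncomputable def algDim (n : ℕ) (S : Set (EuclideanSpace ℂ (Fin n))) :
    WithBot ℕ∞ :=
  ringKrullDim (MvPolynomial (Fin n) ℂ ⧸ vanishingIdeal n S)

/-!
Fix a point `z` of `V` and cut `V` by the `k` linear equations `x' = z'`. The growth condition
bounds `x''` in terms of `x'`, so the cut is a bounded algebraic set. A polynomial function `y` on
an irreducible affine variety over an algebraically closed field `K` omits only finitely many
values unless it is constant: if `y` is transcendental, the coordinate ring is torsion-free over
the principal ideal domain `K[y]`, hence flat, so `y` is an open map to the affine line. On a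
bounded irreducible algebraic set the coordinates are therefore constant, and such a set is a
point. So the maximal ideal of `z` is minimal over `k` elements of the coordinate ring, and Krull's
height theorem bounds its height by `k`.
-/

section

open Bornology MvPolynomial

theorem exists_ne_zero_basicOpen_subset_range_comap (A B : Type*) [CommRing A] [CommRing B]
    [Nontrivial B] [Algebra A B] [Module.Flat A B] [Algebra.FinitePresentation A B] :
    ∃ g : A, g ≠ 0 ∧ (PrimeSpectrum.basicOpen g : Set (PrimeSpectrum A)) ⊆
      Set.range (PrimeSpectrum.comap (algebraMap A B)) := by
  have hopen : IsOpen (Set.range (PrimeSpectrum.comap (algebraMap A B))) :=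
    PrimeSpectrum.isOpenMap_comap_of_hasGoingDown_of_finitePresentation.isOpen_range
  obtain ⟨P, hP⟩ := Set.range_nonempty (PrimeSpectrum.comap (algebraMap A B))
  obtain ⟨_, ⟨g, rfl⟩, hPg, hg⟩ :=
    PrimeSpectrum.isTopologicalBasis_basic_opens.exists_subset_of_mem_open hP hopen
  exact ⟨g, fun hg0 => hPg (by simp [hg0]), hg⟩

theorem finite_resolventSet_of_transcendental {K D : Type*} [Field K] [CommRing D] [IsDomain D]
    [Algebra K D] [Algebra.FiniteType K D] {y : D} (hy : Transcendental K y) :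
    (resolventSet K y).Finite := by
  let : Algebra (Polynomial K) D := (Polynomial.aeval y).toAlgebra
  have : IsScalarTower K (Polynomial K) D :=
    .of_algebraMap_eq fun c => (Polynomial.aeval_C y c).symm
  have : Module.IsTorsionFree (Polynomial K) D :=
    Module.isTorsionFree_iff_algebraMap_injective.2 (transcendental_iff_injective.1 hy)
  have : Algebra.FinitePresentation (Polynomial K) D :=
    Algebra.FinitePresentation.of_finiteType.1 (.of_restrictScalars_finiteType K _ _)
  obtain ⟨g, hg0, hg⟩ := exists_ne_zero_basicOpen_subset_range_comap (Polynomial K) D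
  refine (Polynomial.finite_setOfPred_isRoot hg0).subset fun c hc => ?_
  by_contra hgc
  obtain ⟨Q, hQ⟩ := @hg ⟨RingHom.ker (Polynomial.evalRingHom c), RingHom.ker_isPrime _⟩ hgc
  have hmem : algebraMap K D c - y ∈ Q.asIdeal := by
    have : Polynomial.C c - Polynomial.X ∈
        (PrimeSpectrum.comap (algebraMap (Polynomial K) D) Q).asIdeal := by
      simp [hQ]
    simpa [RingHom.algebraMap_toAlgebra] using this
  exact Q.isPrime.ne_top (Ideal.eq_top_of_isUnit_mem _ hmem hc)

theorem mem_range_algebraMap_of_isBounded_spectrum {K D : Type*} [NontriviallyNormedField K]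
    [IsAlgClosed K] [CommRing D] [IsDomain D] [Algebra K D] [Algebra.FiniteType K D] {y : D}
    (hy : IsBounded (spectrum K y)) : y ∈ (algebraMap K D).range := by
  by_cases hint : IsIntegral K y
  · exact minpoly.mem_range_of_degree_eq_one K y
      (IsAlgClosed.degree_eq_one_of_irreducible K (minpoly.irreducible hint))
  · have hfin : (resolventSet K y).Finite :=
      finite_resolventSet_of_transcendental fun halg => hint halg.isIntegral
    have huniv : IsBounded (Set.univ : Set K) := by
      simpa only [spectrum, Set.compl_union_self] using hy.union hfin.isBounded
    exact absurd huniv (NormedSpace.unbounded_univ K K)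

section Nullstellensatz

variable {K σ : Type*} [Field K] [IsAlgClosed K] [Finite σ] {I : Ideal (MvPolynomial σ K)}

theorem exists_mem_zeroLocus_mk_mem_iff_aeval_eq_zero (m : Ideal (MvPolynomial σ K ⧸ I))
    [m.IsMaximal] :
    ∃ z ∈ zeroLocus K I, ∀ f, Ideal.Quotient.mk I f ∈ m ↔ aeval z f = 0 := by
  have hmax : (m.comap (Ideal.Quotient.mk I)).IsMaximal :=
    Ideal.comap_isMaximal_of_surjective _ Ideal.Quotient.mk_surjective
  obtain ⟨z, hz⟩ := eq_vanishingIdeal_singleton_of_isMaximal K hmax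
  have hmem (f) : Ideal.Quotient.mk I f ∈ m ↔ aeval z f = 0 := by
    rw [← Ideal.mem_comap, hz, mem_vanishingIdeal_singleton_iff]
  exact ⟨z, fun f hf => (hmem f).1 (Ideal.Quotient.eq_zero_iff_mem.2 hf ▸ m.zero_mem), hmem⟩

theorem spectrum_quotientMk_eq_image_zeroLocus (f : MvPolynomial σ K) :
    spectrum K (Ideal.Quotient.mk I f) = (fun z => aeval z f) '' zeroLocus K I := by
  apply Set.Subset.antisymm
  · intro c hc
    obtain ⟨m, hm, hcm⟩ := exists_max_ideal_of_mem_nonunits hc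
    obtain ⟨z, hzI, hz⟩ := exists_mem_zeroLocus_mk_mem_iff_aeval_eq_zero m
    have hzc : aeval z (C c - f) = 0 := (hz _).1 hcm
    rw [map_sub, aeval_C, sub_eq_zero] at hzc
    exact ⟨z, hzI, hzc.symm⟩
  · rintro _ ⟨z, hz, rfl⟩
    exact AlgHom.apply_mem_spectrum (Ideal.Quotient.liftₐ I (aeval z) hz) (Ideal.Quotient.mk I f)

end Nullstellensatz

theorem algebraMap_quotient_surjective_of_forall_X {R σ : Type*} [CommRing R]
    {I : Ideal (MvPolynomial σ R)}
    (h : ∀ i, Ideal.Quotient.mk I (X i) ∈ (algebraMap R (MvPolynomial σ R ⧸ I)).range) :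
    Function.Surjective (algebraMap R (MvPolynomial σ R ⧸ I)) := by
  have hrange : (Ideal.Quotient.mkₐ R I).range ≤ ⊥ := by
    rw [← Algebra.map_top, ← adjoin_range_X, AlgHom.map_adjoin, Algebra.adjoin_le_iff]
    rintro _ ⟨_, ⟨i, rfl⟩, rfl⟩
    exact h i
  exact fun x => hrange (Ideal.Quotient.mk_surjective x)

section BoundedZeroLocus

variable {K σ : Type*} [NontriviallyNormedField K] [IsAlgClosed K] [Finite σ]

theorem isMaximal_of_isBounded_zeroLocus {P : Ideal (MvPolynomial σ K)} [P.IsPrime]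
    (hP : IsBounded (zeroLocus K P)) : P.IsMaximal := by
  have hX (i : σ) : Ideal.Quotient.mk P (X i) ∈ (algebraMap K (MvPolynomial σ K ⧸ P)).range := by
    apply mem_range_algebraMap_of_isBounded_spectrum
    rw [spectrum_quotientMk_eq_image_zeroLocus]
    simpa only [aeval_X] using hP.image_eval i
  have hbij : Function.Bijective (algebraMap K (MvPolynomial σ K ⧸ P)) :=
    ⟨RingHom.injective _, algebraMap_quotient_surjective_of_forall_X hX⟩
  exact Ideal.Quotient.maximal_of_isField P
    ((RingEquiv.ofBijective _ hbij).symm.toMulEquiv.isField (Field.toIsField K))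

theorem isMaximal_of_isBounded_zeroLocus_inter_fiber {ι : Type*} {I P : Ideal (MvPolynomial σ K)}
    [P.IsPrime] {f : ι → MvPolynomial σ K} {a : ι → K} (hIP : I ≤ P)
    (hfP : ∀ j, f j - C (a j) ∈ P)
    (hbdd : IsBounded (zeroLocus K I ∩ {z | ∀ j, aeval z (f j) = a j})) : P.IsMaximal := by
  refine isMaximal_of_isBounded_zeroLocus (hbdd.subset fun z hz => ⟨fun g hg => hz g (hIP hg), ?_⟩)
  intro j
  have hzj : aeval z (f j - C (a j)) = 0 := hz _ (hfP j)
  rwa [map_sub, aeval_C, sub_eq_zero] at hzj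

theorem ringKrullDim_quotient_le_card_of_isBounded_fibers {ι : Type*} [Finite ι]
    (I : Ideal (MvPolynomial σ K)) (f : ι → MvPolynomial σ K)
    (hf : ∀ a : ι → K, IsBounded (zeroLocus K I ∩ {z | ∀ j, aeval z (f j) = a j})) :
    ringKrullDim (MvPolynomial σ K ⧸ I) ≤ Nat.card ι := by
  rw [ringKrullDim_le_iff_isMaximal_height_le]
  intro m _
  obtain ⟨z, -, hz⟩ := exists_mem_zeroLocus_mk_mem_iff_aeval_eq_zero m
  let T : Set (MvPolynomial σ K ⧸ I) :=
    Set.range fun j => Ideal.Quotient.mk I (f j - C (aeval z (f j)))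
  have hTm : Ideal.span T ≤ m := by
    rw [Ideal.span_le]
    rintro _ ⟨j, rfl⟩
    exact (hz _).2 (by simp)
  have hmax (q : Ideal (MvPolynomial σ K ⧸ I)) [q.IsPrime] (hTq : Ideal.span T ≤ q) :
      q.IsMaximal := by
    have : (q.comap (Ideal.Quotient.mk I)).IsMaximal :=
      isMaximal_of_isBounded_zeroLocus_inter_fiber (Ideal.mk_ker.ge.trans (Ideal.ker_le_comap _))
        (fun j => hTq (Ideal.subset_span ⟨j, rfl⟩)) (hf _)
    exact Ideal.isMaximal_of_isIntegral_of_isMaximal_comap' _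
      (RingHom.isIntegral_of_surjective _ Ideal.Quotient.mk_surjective) q this
  have hmin : m ∈ (Ideal.span T).minimalPrimes :=
    ⟨⟨inferInstance, hTm⟩, fun q ⟨_, hTq⟩ hqm =>
      ((hmax q hTq).eq_of_le Ideal.IsPrime.ne_top' hqm).ge⟩
  calc (m.height : WithBot ℕ∞) ≤ T.ncard := by
        exact_mod_cast Ideal.height_le_card_of_mem_minimalPrimes_span (Set.finite_range _) hmin
    _ ≤ Nat.card ι := by exact_mod_cast Finite.card_range_le _

theorem statement3_general {W : Type*} [AddCommGroup W] [Module K W] [FiniteDimensional K W]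
    (I : Ideal (MvPolynomial σ K)) (L : (σ → K) →ₗ[K] W)
    (hL : ∀ y, IsBounded (zeroLocus K I ∩ L ⁻¹' {y})) :
    ringKrullDim (MvPolynomial σ K ⧸ I) ≤ Module.finrank K W := by
  classical
  have := Fintype.ofFinite σ
  let b := Module.finBasis K W
  let M := LinearMap.toMatrix (Pi.basisFun K σ) b L
  have hM (z : σ → K) (j) : aeval z (M.toMvPolynomial j) = b.repr (L z) j := by
    rw [← LinearMap.toMatrix_mulVec_repr (Pi.basisFun K σ) b L z, aeval_eq_eval]
    exact Matrix.toMvPolynomial_eval_eq_apply M j z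
  rw [← Nat.card_fin (Module.finrank K W)]
  refine ringKrullDim_quotient_le_card_of_isBounded_fibers I M.toMvPolynomial fun a => ?_
  refine (hL (b.equivFun.symm a)).subset fun z ⟨hzI, hza⟩ => ⟨hzI, ?_⟩
  rw [Set.mem_preimage, Set.mem_singleton_iff, LinearEquiv.eq_symm_apply]
  funext j
  exact (hM z j).symm.trans (hza j)

end BoundedZeroLocus

theorem zeroLocus_vanishingIdeal_eq_image {n : ℕ} {V : Set (EuclideanSpace ℂ (Fin n))}
    {I : Ideal (MvPolynomial (Fin n) ℂ)}
    (hV : V = {z | ∀ f ∈ I, eval (fun i => z i) f = 0}) :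
    zeroLocus ℂ (_root_.vanishingIdeal n V) = WithLp.ofLp '' V := by
  apply Set.Subset.antisymm
  · intro z hz
    have hzV : WithLp.toLp 2 z ∈ V :=
      hV.superset fun f hf => hz f fun w hw => hV.subset hw f hf
    exact ⟨_, hzV, rfl⟩
  · rintro _ ⟨z, hz, rfl⟩ f hf
    exact hf z hz

theorem isBounded_zeroLocus_vanishingIdeal_inter {n : ℕ} {V : Set (EuclideanSpace ℂ (Fin n))}
    {I : Ideal (MvPolynomial (Fin n) ℂ)}
    (hV : V = {z | ∀ f ∈ I, eval (fun i => z i) f = 0}) {S : Set (Fin n → ℂ)}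
    (hS : IsBounded (V ∩ WithLp.ofLp ⁻¹' S)) :
    IsBounded (zeroLocus ℂ (_root_.vanishingIdeal n V) ∩ S) := by
  rw [zeroLocus_vanishingIdeal_eq_image hV, ← Set.image_inter_preimage]
  exact (PiLp.lipschitzWith_ofLp 2 _).isBounded_image hS

theorem eq_projectionOnto {R E : Type*} [Ring R] [AddCommGroup E] [Module R E]
    {p q : Submodule R E} (h : IsCompl p q) {x y : E} (hy : y ∈ p) (hxy : x - y ∈ q) :
    y = p.projectionOnto q h x := by
  rw [← sub_add_cancel x y, map_add, (p.projectionOnto_apply_eq_zero_iff h).2 hxy, zero_add,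
    p.projectionOnto_apply_of_mem_left h hy]

theorem isBounded_inter_projectionOnto_preimage_singleton {R E : Type*} [Ring R]
    [SeminormedAddCommGroup E] [Module R E] {p q : Submodule R E} (hpq : IsCompl p q) {π : E → E}
    (hπ : ∀ z, π z ∈ p ∧ z - π z ∈ q) {S : Set E} {φ : E → ℝ}
    (hS : ∀ z ∈ S, ‖z - π z‖ ≤ φ (π z)) (y : p) :
    IsBounded (S ∩ p.projectionOnto q hpq ⁻¹' {y}) := by
  refine Metric.isBounded_closedBall.subset (t := Metric.closedBall (y : E) (φ y)) ?_
  rintro z ⟨hz, rfl⟩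
  rw [← eq_projectionOnto hpq (hπ z).1 (hπ z).2]
  exact mem_closedBall_iff_norm.2 (hS z hz)

end

/-- Let `V ⊆ ℂⁿ` be a complex algebraic set, i.e. the common zero
locus of an ideal `I` of `ℂ[x₁, …, xₙ]`.  Suppose `V` lies in an algebraic region of
type `(k, n)`: there exist complementary complex subspaces `V₁, V₂` with
`dim V₁ = k`, `dim V₂ = n - k`, and positive reals `A, B` such that every `z ∈ V`
satisfies `‖z''‖ ≤ A(1 + ‖z'‖)^B`, where `π : z ↦ z'` is the projection onto `V₁`
along `V₂` and `z'' = z - π z`.  Then `dim V ≤ k`, where `dim V` is the Krull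
dimension of `ℂ[x₁, …, xₙ]/I(V)`. -/
theorem statement3 (n k : ℕ) (hn : 2 ≤ n)
    (I : Ideal (MvPolynomial (Fin n) ℂ))
    (V : Set (EuclideanSpace ℂ (Fin n)))
    (hValg : V = {z | ∀ f ∈ I, MvPolynomial.eval (fun i => z i) f = 0})
    (V₁ V₂ : Submodule ℂ (EuclideanSpace ℂ (Fin n))) (hcompl : IsCompl V₁ V₂)
    (hk₁ : Module.finrank ℂ V₁ = k) (hk₂ : Module.finrank ℂ V₂ = n - k)
    (π : EuclideanSpace ℂ (Fin n) → EuclideanSpace ℂ (Fin n))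
    (hπ : ∀ z, π z ∈ V₁ ∧ z - π z ∈ V₂)
    (A B : ℝ) (hA : 0 < A) (hB : 0 < B)
    (hVΩ : ∀ z ∈ V, ‖z - π z‖ ≤ A * (1 + ‖π z‖) ^ B) :
    algDim n V ≤ (k : WithBot ℕ∞) := by
  let L : (Fin n → ℂ) →ₗ[ℂ] V₁ :=
    V₁.projectionOnto V₂ hcompl ∘ₗ (EuclideanSpace.equiv (Fin n) ℂ).symm.toLinearMap
  exact hk₁ ▸ statement3_general (vanishingIdeal n V) L fun y =>
    isBounded_zeroLocus_vanishingIdeal_inter hValg <|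
      isBounded_inter_projectionOnto_preimage_singleton hcompl hπ
        (φ := fun v => A * (1 + ‖v‖) ^ B) hVΩ y
end

section
/- Let n ≥ 2 and let V ⊆ ℂⁿ be an unbounded complex algebraic set, i.e., the unbounded common zero locus in ℂⁿ of an ideal of ℂ[x₁, …, xₙ]. Let C_∞(V) = {v ∈ ℂⁿ : there exist sequences (x_j) in V and (t_j) in ℂ with ‖x_j‖ → ∞ and t_j x_j → v} be its (geometric) tangent cone at infinity. Then dim V = dim C_∞(V), where for a subset S ⊆ ℂⁿ, dim S denotes the Krull dimension of the coordinate ring ℂ[x₁, …, xₙ]/I(S) and I(S) is the ideal of all polynomials vanishing identically on S. -/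
/-- The geometric tangent cone at infinity of `V ⊆ ℂⁿ`: the set of `v ∈ ℂⁿ` for which
there exist sequences `x j ∈ V` and `t j ∈ ℂ` with `‖x j‖ → ∞` and `t j • x j → v`. -/
def geomTangentConeAtInfty (n : ℕ) (V : Set (EuclideanSpace ℂ (Fin n))) :
    Set (EuclideanSpace ℂ (Fin n)) :=
  {v | ∃ x : ℕ → EuclideanSpace ℂ (Fin n), ∃ t : ℕ → ℂ, (∀ j, x j ∈ V) ∧
    Filter.Tendsto (fun j => ‖x j‖) Filter.atTop Filter.atTop ∧
    Filter.Tendsto (fun j => t j • x j) Filter.atTop (nhds v)}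

/-!
Embed `V` as the slice `t = 1` of the affine cone `{(t, t p) : p ∈ V}`; the slice `t = 0` of the
closure of that cone contains `C_∞(V)`. A Noether normalization of the cone that keeps the
coordinate `t` is given by a linear map `M : ℂⁿ → ℂᵈ` such that every coordinate of the cone
satisfies a monic equation whose coefficients are polynomials in `(t, M v)`, and such that `M(V)`
is Zariski dense in `ℂᵈ`. Put `t = 1` in these equations, or let `t → 0` along the sequences that
define `C_∞(V)`: then `M` is finite on `V` and on `C_∞(V)`, so both have dimension `d` once
`M(C_∞(V))` is known to be dense too. In fact `C_∞(V)` maps onto `ℂᵈ`. By lying over, `M` maps `V`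
onto `ℂᵈ`, so for `w ≠ 0` there are `p_j ∈ V` with `M p_j = (j + 1) w`. The points `(j + 1)⁻¹ p_j`
are bounded because they are roots of monic equations with convergent coefficients, and each of
their accumulation points lies in `C_∞(V)` and is mapped to `w`.
-/

open Filter Topology Matrix
open MvPolynomial hiding vanishingIdeal

section Integrality

variable {σ k R S A : Type*}

theorem isIntegralElem_of_forall_isIntegralElem [CommRing R] [CommRing S] [CommRing A]
    {φ : R →+* A} {ψ : S →+* A} (hφ : ∀ r, ψ.IsIntegralElem (φ r)) {a : A}
    (ha : φ.IsIntegralElem a) : ψ.IsIntegralElem a := by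
  let _ : Algebra S A := ψ.toAlgebra
  obtain ⟨P, hP, hPa⟩ := ha
  let φ' : R →+* integralClosure S A := φ.codRestrict (integralClosure S A).toSubring hφ
  have : IsIntegral (integralClosure S A) a := by
    refine ⟨P.map φ', hP.map φ', ?_⟩
    rw [Polynomial.eval₂_map]
    exact hPa
  exact isIntegral_trans (R := S) a this

theorem isIntegralElem_aeval [CommRing k] [CommRing R] [CommRing A] [Algebra k R] [Algebra k A]
    {ψ : R →ₐ[k] A} {y : σ → A} (hy : ∀ i, ψ.toRingHom.IsIntegralElem (y i))
    (F : MvPolynomial σ k) : ψ.toRingHom.IsIntegralElem (aeval y F) := by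
  induction F using MvPolynomial.induction_on with
  | C c =>
    rw [aeval_C, ← ψ.commutes]
    exact ψ.toRingHom.isIntegralElem_map
  | add F G hF hG => rw [map_add]; exact hF.add _ hG
  | mul_X F i hF => rw [map_mul, aeval_X]; exact hF.mul _ (hy i)

theorem ringKrullDim_eq_of_isIntegral_of_injective [CommRing R] [CommRing S] {φ : R →+* S}
    (hφ : φ.IsIntegral) (hinj : Function.Injective φ) : ringKrullDim R = ringKrullDim S := by
  let _ : Algebra R S := φ.toAlgebra
  have : Algebra.IsIntegral R S := ⟨hφ⟩
  have : FaithfulSMul R S := (faithfulSMul_iff_algebraMap_injective R S).2 hinj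
  refine le_antisymm (iSup_le fun l => ?_)
    (Order.krullDim_le_of_strictMono (PrimeSpectrum.comap φ) fun _ _ hPQ =>
      Ideal.IsIntegral.comap_lt_comap (R := R) hPQ)
  have := l.head.isPrime
  have hker : RingHom.ker (algebraMap R S) = ⊥ := (RingHom.injective_iff_ker_eq_bot _).1 hinj
  obtain ⟨P, -, hP, hPl⟩ := Ideal.exists_ideal_over_prime_of_isIntegral (S := S)
    l.head.asIdeal ⊥ (by rw [← RingHom.ker_eq_comap_bot, hker]; exact bot_le)
  have : P.LiesOver l.head.asIdeal := ⟨hPl.symm⟩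
  obtain ⟨L, hL, -⟩ := Ideal.exists_ltSeries_of_hasGoingUp (S := S) l P
  rw [← hL]
  exact le_iSup (fun p : LTSeries (PrimeSpectrum S) => (p.length : WithBot ℕ∞)) L

theorem exists_mem_zeroLocus_eval_eq {τ : Type*} [Field k] [IsAlgClosed k] [Finite σ]
    {J : Ideal (MvPolynomial σ k)} {g : τ → MvPolynomial σ k}
    (hint : ((Ideal.Quotient.mkₐ k J).comp (aeval g)).toRingHom.IsIntegral)
    (hinj : Function.Injective ((Ideal.Quotient.mkₐ k J).comp (aeval g))) (w : τ → k) :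
    ∃ p ∈ zeroLocus k J, ∀ j, eval p (g j) = w j := by
  let θ := (Ideal.Quotient.mkₐ k J).comp (aeval g)
  let _ : Algebra (MvPolynomial τ k) (MvPolynomial σ k ⧸ J) := θ.toRingHom.toAlgebra
  have : Algebra.IsIntegral (MvPolynomial τ k) (MvPolynomial σ k ⧸ J) := ⟨hint⟩
  have : (RingHom.ker (eval w)).IsPrime := RingHom.ker_isPrime _
  have hker : RingHom.ker (algebraMap (MvPolynomial τ k) (MvPolynomial σ k ⧸ J)) = ⊥ :=
    (RingHom.injective_iff_ker_eq_bot _).1 hinj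
  obtain ⟨Q, -, hQ, hQw⟩ := Ideal.exists_ideal_over_prime_of_isIntegral
    (S := MvPolynomial σ k ⧸ J) (RingHom.ker (eval w)) ⊥
    (by rw [← RingHom.ker_eq_comap_bot, hker]; exact bot_le)
  obtain ⟨N, hN, hQN⟩ := Ideal.exists_le_maximal _
    (Ideal.comap_ne_top (Ideal.Quotient.mk J) hQ.ne_top)
  obtain ⟨p, rfl⟩ := isMaximal_iff_eq_vanishingIdeal_singleton.1 hN
  have hp : ∀ f, Ideal.Quotient.mk J f ∈ Q → eval p f = 0 := fun f hf => by
    simpa [mem_vanishingIdeal_singleton_iff] using hQN hf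
  refine ⟨p, fun f hf => ?_, fun j => ?_⟩
  · rw [aeval_eq_eval]
    exact hp f (by rw [Ideal.Quotient.eq_zero_iff_mem.2 hf]; exact Q.zero_mem)
  · have hj : X j - C (w j) ∈ Q.comap (algebraMap (MvPolynomial τ k) (MvPolynomial σ k ⧸ J)) := by
      rw [hQw, RingHom.mem_ker]
      simp
    have : θ (X j - C (w j)) = Ideal.Quotient.mk J (g j - C (w j)) := by
      simp [θ, ← algebraMap_eq]
    have := hp _ (this ▸ hj : Ideal.Quotient.mk J (g j - C (w j)) ∈ Q)
    simpa [sub_eq_zero] using this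

end Integrality

section RestrictToLine

variable {σ k R A : Type*} [CommRing R]

/-- The restriction of a polynomial to the line `s ↦ z + s c`, whose base point `z` has coordinates
in the `k`-algebra `R` and whose direction `c` is defined over `k`. -/
noncomputable def restrictToLine [CommRing k] [Algebra k R] (z : σ → R) (c : σ → k) :
    MvPolynomial σ k →ₐ[k] Polynomial R :=
  aeval fun i => Polynomial.C (z i) + Polynomial.C (algebraMap k R (c i)) * Polynomial.X

theorem natDegree_prod_linear_pow_le (z c : σ → R) (e : σ → ℕ) (s : Finset σ) :
    (∏ i ∈ s, (Polynomial.C (z i) + Polynomial.C (c i) * Polynomial.X) ^ e i).natDegree ≤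
      ∑ i ∈ s, e i := by
  refine (Polynomial.natDegree_prod_le _ _).trans (Finset.sum_le_sum fun i _ => ?_)
  have : (Polynomial.C (z i) + Polynomial.C (c i) * Polynomial.X).natDegree ≤ 1 := by
    compute_degree
  simpa using Polynomial.natDegree_pow_le_of_le (e i) this

theorem coeff_prod_linear_pow (z c : σ → R) (e : σ → ℕ) (s : Finset σ) :
    (∏ i ∈ s, (Polynomial.C (z i) + Polynomial.C (c i) * Polynomial.X) ^ e i).coeff (∑ i ∈ s, e i) =
      ∏ i ∈ s, c i ^ e i := by
  classical
  induction s using Finset.induction_on with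
  | empty => simp
  | insert i s hi ih =>
    have hlin : (Polynomial.C (z i) + Polynomial.C (c i) * Polynomial.X).natDegree ≤ 1 := by
      compute_degree
    have hpow := Polynomial.coeff_pow_of_natDegree_le (m := e i) hlin
    rw [mul_one] at hpow
    rw [Finset.prod_insert hi, Finset.sum_insert hi, Finset.prod_insert hi,
      Polynomial.coeff_mul_add_eq_of_natDegree_le
        (by simpa using Polynomial.natDegree_pow_le_of_le (e i) hlin)
        (natDegree_prod_linear_pow_le z c e s), ih, hpow]
    simp

theorem restrictToLine_eq_sum [CommRing k] [Algebra k R] (z : σ → R) (c : σ → k)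
    (F : MvPolynomial σ k) :
    restrictToLine z c F = ∑ e ∈ F.support, Polynomial.C (algebraMap k R (F.coeff e)) *
      ∏ i ∈ e.support,
        (Polynomial.C (z i) + Polynomial.C (algebraMap k R (c i)) * Polynomial.X) ^ e i := by
  rw [restrictToLine, aeval_def, eval₂_eq]
  rfl

theorem natDegree_restrictToLine_le [CommRing k] [Algebra k R] (z : σ → R) (c : σ → k)
    {F : MvPolynomial σ k} {N : ℕ} (hF : F.IsHomogeneous N) :
    (restrictToLine z c F).natDegree ≤ N := by
  rw [restrictToLine_eq_sum]
  refine Polynomial.natDegree_sum_le_of_forall_le _ _ fun e he => ?_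
  rw [hF.degree_eq_sum_deg_support he]
  exact (Polynomial.natDegree_C_mul_le _ _).trans (natDegree_prod_linear_pow_le _ _ e _)

theorem coeff_restrictToLine [CommRing k] [Algebra k R] (z : σ → R) (c : σ → k)
    {F : MvPolynomial σ k} {N : ℕ} (hF : F.IsHomogeneous N) :
    (restrictToLine z c F).coeff N = algebraMap k R (eval c F) := by
  rw [restrictToLine_eq_sum, Polynomial.finsetSum_coeff, eval_eq, map_sum]
  refine Finset.sum_congr rfl fun e he => ?_
  rw [Polynomial.coeff_C_mul, hF.degree_eq_sum_deg_support he,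
    coeff_prod_linear_pow z (fun i => algebraMap k R (c i)), map_mul, map_prod]
  simp only [map_pow]

theorem eval₂_restrictToLine [CommRing k] [Algebra k R] [CommRing A] [Algebra k A] (ψ : R →ₐ[k] A)
    (z : σ → R) (c : σ → k) (s : A) (F : MvPolynomial σ k) :
    (restrictToLine z c F).eval₂ ψ.toRingHom s = aeval (fun i => ψ (z i) + c i • s) F := by
  induction F using MvPolynomial.induction_on with
  | C a => simp [restrictToLine, Polynomial.algebraMap_apply]
  | add F G hF hG => rw [map_add, Polynomial.eval₂_add, hF, hG, map_add]
  | mul_X F i hF =>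
    rw [map_mul, Polynomial.eval₂_mul, hF, map_mul]
    simp [restrictToLine, Algebra.smul_def]

theorem isIntegralElem_of_aeval_line_eq_zero [Field k] [Algebra k R] [CommRing A] [Algebra k A]
    (ψ : R →ₐ[k] A) {F : MvPolynomial σ k} {N : ℕ} (hF : F.IsHomogeneous N) {c : σ → k}
    (hc : eval c F ≠ 0) {z : σ → R} {s : A} (h : aeval (fun i => ψ (z i) + c i • s) F = 0) :
    ψ.toRingHom.IsIntegralElem s := by
  refine ⟨restrictToLine z c (C (eval c F)⁻¹ * F),
    Polynomial.monic_of_natDegree_le_of_coeff_eq_one N (natDegree_restrictToLine_le z c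
      (hF.C_mul _)) ?_, ?_⟩
  · rw [coeff_restrictToLine z c (hF.C_mul _), map_mul, eval_C, inv_mul_cancel₀ hc, map_one]
  · rw [eval₂_restrictToLine, map_mul, h, mul_zero]

end RestrictToLine

section Homogenization

variable {σ R : Type*} [CommSemiring R]

theorem eval_smul_of_isHomogeneous {N : ℕ} {F : MvPolynomial σ R} (hF : F.IsHomogeneous N) (t : R)
    (y : σ → R) : eval (t • y) F = t ^ N * eval y F := by
  rw [eval_eq, eval_eq, Finset.mul_sum]
  refine Finset.sum_congr rfl fun e he => ?_
  simp only [Pi.smul_apply, smul_eq_mul, mul_pow, Finset.prod_mul_distrib]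
  rw [Finset.prod_pow_eq_pow_sum, ← hF.degree_eq_sum_deg_support he, mul_left_comm]

theorem homogeneousComponent_totalDegree_ne_zero {f : MvPolynomial σ R} (hf : f ≠ 0) :
    homogeneousComponent f.totalDegree f ≠ 0 := by
  obtain ⟨e, he, hmax⟩ := Finset.exists_mem_eq_sup f.support (support_nonempty.2 hf)
    (fun e => e.sum fun _ a => a)
  intro h
  have hdeg : e.degree = f.totalDegree := hmax.symm
  have hcoeff := congrArg (coeff e) h
  rw [coeff_homogeneousComponent, if_pos hdeg] at hcoeff
  exact mem_support_iff.1 he hcoeff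

/-- The homogenization `∑ᵢ Tᴺ⁻ⁱ fᵢ` of a polynomial `f` of total degree `N` with homogeneous
components `fᵢ`; the homogenizing variable `T` is `X none`. -/
noncomputable def homogenize (f : MvPolynomial σ R) : MvPolynomial (Option σ) R :=
  ∑ i ∈ Finset.range (f.totalDegree + 1),
    X none ^ (f.totalDegree - i) * rename some (homogeneousComponent i f)

theorem isHomogeneous_homogenize (f : MvPolynomial σ R) :
    (homogenize f).IsHomogeneous f.totalDegree := by
  refine IsHomogeneous.sum _ _ _ fun i hi => ?_
  have := (isHomogeneous_X_pow (R := R) (none : Option σ) (f.totalDegree - i)).mul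
    ((homogeneousComponent_isHomogeneous i f).rename_isHomogeneous (f := some))
  rwa [Nat.sub_add_cancel (Finset.mem_range_succ_iff.1 hi)] at this

theorem eval_homogenize (f : MvPolynomial σ R) (t : R) (y : σ → R) :
    eval (Option.elim · t y) (homogenize f) = ∑ i ∈ Finset.range (f.totalDegree + 1),
      t ^ (f.totalDegree - i) * eval y (homogeneousComponent i f) := by
  simp only [homogenize, map_sum, map_mul, map_pow, eval_X, eval_rename, Option.elim_none]
  rfl

theorem eval_homogenize_smul (f : MvPolynomial σ R) (t : R) (y : σ → R) :
    eval (Option.elim · t (t • y)) (homogenize f) = t ^ f.totalDegree * eval y f := by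
  have hsum : ∑ i ∈ Finset.range (f.totalDegree + 1), eval y (homogeneousComponent i f) =
      eval y f := by rw [← map_sum, sum_homogeneousComponent]
  rw [eval_homogenize, ← hsum, Finset.mul_sum]
  refine Finset.sum_congr rfl fun i hi => ?_
  rw [eval_smul_of_isHomogeneous (homogeneousComponent_isHomogeneous i f), ← mul_assoc, ← pow_add,
    Nat.sub_add_cancel (Finset.mem_range_succ_iff.1 hi)]

theorem eval_homogenize_zero (f : MvPolynomial σ R) (y : σ → R) :
    eval (Option.elim · 0 y) (homogenize f) = eval y (homogeneousComponent f.totalDegree f) := by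
  rw [eval_homogenize, Finset.sum_range_succ, Finset.sum_eq_zero, zero_add, Nat.sub_self, pow_zero,
    one_mul]
  intro i hi
  rw [zero_pow (Nat.sub_ne_zero_of_lt (Finset.mem_range.1 hi)), zero_mul]

end Homogenization

section NoetherNormalization

variable {n d : ℕ} {V : Set (EuclideanSpace ℂ (Fin n))} {M : Matrix (Fin d) (Fin n) ℂ}

theorem aeval_pi_apply {σ ι k : Type*} [CommSemiring k] (g : σ → ι → k) (F : MvPolynomial σ k)
    (x : ι) : aeval g F x = eval (g · x) F := by
  rw [← aeval_eq_eval]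
  exact DFunLike.congr_fun (comp_aeval g (Pi.evalAlgHom k (fun _ : ι => k) x)) F

/-- The affine cone `{(t, t p) : t ∈ ℂ, p ∈ V}`. The slice `t = 1` is `V`, and the slice `t = 0` of
its closure contains the tangent cone of `V` at infinity. -/
def affineCone (V : Set (EuclideanSpace ℂ (Fin n))) : Set (ℂ × EuclideanSpace ℂ (Fin n)) :=
  {q | ∃ p ∈ V, q.2 = q.1 • p}

/-- The image `(t, M v)` of the point `q = (t, v)`; the coordinate `t` has index `none`. -/
def conePoint (M : Matrix (Fin d) (Fin n) ℂ) (q : ℂ × EuclideanSpace ℂ (Fin n)) :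
    Option (Fin d) → ℂ :=
  (Option.elim · q.1 (M *ᵥ q.2.ofLp))

theorem conePoint_smul (M : Matrix (Fin d) (Fin n) ℂ) (t : ℂ) (p : EuclideanSpace ℂ (Fin n)) :
    conePoint M (t, t • p) = (Option.elim · t (t • M *ᵥ p.ofLp)) := by
  rw [← mulVec_smul]
  rfl

/-- Pullback of polynomials to functions on the affine cone over `V`, along `(t, v) ↦ (t, M v)`. -/
noncomputable def coneComap (V : Set (EuclideanSpace ℂ (Fin n))) (M : Matrix (Fin d) (Fin n) ℂ) :
    MvPolynomial (Option (Fin d)) ℂ →ₐ[ℂ] (affineCone V → ℂ) :=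
  aeval fun o q => conePoint M q o

theorem coneComap_apply (F : MvPolynomial (Option (Fin d)) ℂ) (q : affineCone V) :
    coneComap V M F q = eval (conePoint M q) F :=
  aeval_pi_apply _ F q

/-- The linear projection `M` is finite on the projective closure of `V`: on the affine cone over
`V`, every coordinate `vᵢ` is integral over the polynomials in `(t, M v)`. -/
def IsFiniteAtInfty (V : Set (EuclideanSpace ℂ (Fin n))) (M : Matrix (Fin d) (Fin n) ℂ) : Prop :=
  ∀ i, (coneComap V M).toRingHom.IsIntegralElem fun q => q.1.2 i

theorem isFiniteAtInfty_one : IsFiniteAtInfty V (1 : Matrix (Fin n) (Fin n) ℂ) := by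
  intro i
  have hX : coneComap V 1 (X (some i)) = fun q => q.1.2 i := by
    ext q
    simp [coneComap_apply, conePoint]
  rw [← hX]
  exact (coneComap V 1).toRingHom.isIntegralElem_map

theorem IsFiniteAtInfty.of_forall_isIntegralElem (hM : IsFiniteAtInfty V M) {e : ℕ}
    {M' : Matrix (Fin e) (Fin n) ℂ}
    (h : ∀ j, (coneComap V M').toRingHom.IsIntegralElem fun q => (M *ᵥ q.1.2.ofLp) j) :
    IsFiniteAtInfty V M' := by
  intro i
  refine isIntegralElem_of_forall_isIntegralElem (fun F => ?_) (hM i)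
  refine isIntegralElem_aeval (fun o => ?_) F
  cases o with
  | none =>
    have hX : coneComap V M' (X none) = fun q => q.1.1 := by
      ext q
      simp [coneComap_apply, conePoint]
    exact hX ▸ (coneComap V M').toRingHom.isIntegralElem_map
  | some j => exact h j

/-- The matrix `M` followed by the projection of `ℂᵈ⁺¹` along the vector `c` onto the coordinate
hyperplane `yᵢ = 0`, where `cᵢ ≠ 0`. -/
noncomputable def projectAlong (M : Matrix (Fin (d + 1)) (Fin n) ℂ) (c : Fin (d + 1) → ℂ)
    (i : Fin (d + 1)) : Matrix (Fin d) (Fin n) ℂ :=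
  Matrix.of fun k => M (i.succAbove k) - (c (i.succAbove k) / c i) • M i

theorem projectAlong_mulVec (M : Matrix (Fin (d + 1)) (Fin n) ℂ) (c : Fin (d + 1) → ℂ)
    (i : Fin (d + 1)) (p : Fin n → ℂ) (k : Fin d) :
    (projectAlong M c i *ᵥ p) k =
      (M *ᵥ p) (i.succAbove k) - c (i.succAbove k) / c i * (M *ᵥ p) i := by
  change (M (i.succAbove k) - (c (i.succAbove k) / c i) • M i) ⬝ᵥ p = _
  rw [sub_dotProduct, smul_dotProduct, smul_eq_mul]
  rfl

theorem isFiniteAtInfty_projectAlong {M : Matrix (Fin (d + 1)) (Fin n) ℂ}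
    (hM : IsFiniteAtInfty V M) {F : MvPolynomial (Option (Fin (d + 1))) ℂ} {N : ℕ}
    (hF : F.IsHomogeneous N) (hFV : coneComap V M F = 0) {c : Fin (d + 1) → ℂ}
    (hc : eval (Option.elim · 0 c) F ≠ 0) {i : Fin (d + 1)} (hi : c i ≠ 0) :
    IsFiniteAtInfty V (projectAlong M c i) := by
  let ψ := coneComap V (projectAlong M c i)
  let s : affineCone V → ℂ := fun q => (M *ᵥ q.1.2.ofLp) i / c i
  let z : Option (Fin (d + 1)) → MvPolynomial (Option (Fin d)) ℂ :=
    (Option.elim · (X none) (i.insertNth 0 fun k => X (some k)))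
  have hline : ∀ o, ψ (z o) + (Option.elim o 0 c) • s =
      fun q : affineCone V => conePoint M q o := by
    intro o
    ext q
    cases o with
    | none => simp [ψ, z, coneComap_apply, conePoint]
    | some j =>
      cases j using i.succAboveCases with
      | x => simpa [ψ, z, s, conePoint] using mul_div_cancel₀ ((M *ᵥ q.1.2.ofLp) i) hi
      | p k =>
        simp only [ψ, z, s, Option.elim_some, Fin.insertNth_apply_succAbove, Pi.add_apply,
          coneComap_apply, conePoint, eval_X, Pi.smul_apply, projectAlong_mulVec, smul_eq_mul]
        ring
  have hs : ψ.toRingHom.IsIntegralElem s := by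
    refine isIntegralElem_of_aeval_line_eq_zero ψ hF hc (z := z) ?_
    simp only [hline]
    exact hFV
  refine hM.of_forall_isIntegralElem fun j => ?_
  have hj : (fun q : affineCone V => (M *ᵥ q.1.2.ofLp) j) = ψ (z (some j)) + ψ (C (c j)) * s := by
    rw [← algebraMap_eq, ψ.commutes, ← Algebra.smul_def]
    exact (hline (some j)).symm
  rw [hj]
  exact ψ.toRingHom.isIntegralElem_map.add _ (ψ.toRingHom.isIntegralElem_map.mul _ hs)

theorem IsFiniteAtInfty.exists_lt (hM : IsFiniteAtInfty V M) (hV : V.Nonempty)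
    {f : MvPolynomial (Fin d) ℂ} (hf : f ≠ 0) (hfV : ∀ p ∈ V, eval (M *ᵥ p.ofLp) f = 0) :
    ∃ e < d, ∃ M' : Matrix (Fin e) (Fin n) ℂ, IsFiniteAtInfty V M' := by
  have hFV : coneComap V M (homogenize f) = 0 := by
    ext ⟨⟨t, v⟩, p, hp, hv⟩
    obtain rfl : v = t • p := hv
    rw [coneComap_apply, conePoint_smul, eval_homogenize_smul, hfV p hp, mul_zero, Pi.zero_apply]
  obtain ⟨c, hc⟩ : ∃ c, eval (Option.elim · 0 c) (homogenize f) ≠ 0 := by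
    by_contra! h
    refine homogeneousComponent_totalDegree_ne_zero hf (funext fun c => ?_)
    rw [← eval_homogenize_zero, h, map_zero]
  obtain ⟨i, hi⟩ : ∃ i, c i ≠ 0 := by
    obtain ⟨p, hp⟩ := hV
    by_contra! h
    have hvertex := congrFun hFV ⟨(0, (0 : ℂ) • p), p, hp, rfl⟩
    rw [coneComap_apply, conePoint_smul, zero_smul, ← (_root_.funext h : c = 0)] at hvertex
    exact hc hvertex
  obtain _ | d := d
  · exact i.elim0
  · exact ⟨d, d.lt_succ_self, _,
      isFiniteAtInfty_projectAlong hM (isHomogeneous_homogenize f) hFV hc hi⟩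

theorem exists_isFiniteAtInfty_dense (hV : V.Nonempty) :
    ∃ (d : ℕ) (M : Matrix (Fin d) (Fin n) ℂ), IsFiniteAtInfty V M ∧
      ∀ f : MvPolynomial (Fin d) ℂ, (∀ p ∈ V, eval (M *ᵥ p.ofLp) f = 0) → f = 0 := by
  classical
  have hex : ∃ d, ∃ M : Matrix (Fin d) (Fin n) ℂ, IsFiniteAtInfty V M := ⟨n, 1, isFiniteAtInfty_one⟩
  obtain ⟨M, hM⟩ := Nat.find_spec hex
  refine ⟨Nat.find hex, M, hM, fun f hfV => ?_⟩
  by_contra hf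
  obtain ⟨e, he, hM'⟩ := hM.exists_lt hV hf hfV
  exact Nat.find_min hex he hM'

end NoetherNormalization

section MonicFamily

variable {σ k : Type*}

theorem continuous_eval_map_eval [CommSemiring k] [TopologicalSpace k] [IsTopologicalSemiring k]
    (P : Polynomial (MvPolynomial σ k)) :
    Continuous fun q : (σ → k) × k => (P.map (eval q.1)).eval q.2 := by
  simp only [Polynomial.eval_map, Polynomial.eval₂_eq_sum, Polynomial.sum]
  exact continuous_finsetSum _ fun m _ =>
    ((continuous_eval (P.coeff m)).comp continuous_fst).mul (continuous_snd.pow m)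

theorem continuous_cauchyBound_map_eval [NormedField k] {P : Polynomial (MvPolynomial σ k)}
    (hP : P.Monic) : Continuous fun y : σ → k => (P.map (eval y)).cauchyBound := by
  simp only [Polynomial.cauchyBound, (hP.map _).leadingCoeff, hP.natDegree_map,
    Polynomial.coeff_map, nnnorm_one, div_one]
  exact (Continuous.finset_sup_apply fun m _ => (continuous_eval (P.coeff m)).nnnorm).add
    continuous_const

end MonicFamily

section FiniteAtInfty

variable {n d : ℕ} {V S : Set (EuclideanSpace ℂ (Fin n))} {M : Matrix (Fin d) (Fin n) ℂ}

theorem continuous_conePoint (M : Matrix (Fin d) (Fin n) ℂ) : Continuous (conePoint M) := by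
  refine continuous_pi fun o => ?_
  cases o with
  | none => exact continuous_fst
  | some j =>
    have : Continuous fun q : ℂ × EuclideanSpace ℂ (Fin n) => M *ᵥ q.2.ofLp := by fun_prop
    exact (continuous_apply j).comp this

theorem IsFiniteAtInfty.exists_monic (hM : IsFiniteAtInfty V M) (i : Fin n) :
    ∃ P : Polynomial (MvPolynomial (Option (Fin d)) ℂ), P.Monic ∧
      ∀ q ∈ closure (affineCone V), (P.map (eval (conePoint M q))).eval (q.2 i) = 0 := by
  obtain ⟨P, hP, hroot⟩ := hM i
  have hcone : ∀ q ∈ affineCone V, (P.map (eval (conePoint M q))).eval (q.2 i) = 0 := by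
    intro q hq
    have hcomp : (Pi.evalRingHom (fun _ => ℂ) ⟨q, hq⟩).comp (coneComap V M).toRingHom =
        eval (conePoint M q) := RingHom.ext fun F => coneComap_apply F ⟨q, hq⟩
    have := congrArg (Pi.evalRingHom (fun _ : affineCone V => ℂ) ⟨q, hq⟩) hroot
    rwa [Polynomial.hom_eval₂, hcomp, map_zero, ← Polynomial.eval_map] at this
  refine ⟨P, hP, fun q hq => ?_⟩
  have hcont : Continuous fun q : ℂ × EuclideanSpace ℂ (Fin n) =>
      (P.map (eval (conePoint M q))).eval (q.2 i) :=
    (continuous_eval_map_eval P).comp ((continuous_conePoint M).prodMk (by fun_prop))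
  exact closure_minimal hcone (isClosed_eq hcont continuous_const) hq

theorem IsFiniteAtInfty.exists_continuous_norm_le (hM : IsFiniteAtInfty V M) :
    ∃ b : (Option (Fin d) → ℂ) → ℝ, Continuous b ∧
      ∀ q ∈ affineCone V, ‖q.2‖ ≤ b (conePoint M q) := by
  choose P hP hroot using hM.exists_monic
  refine ⟨fun y => √(∑ i, ((P i).map (eval y)).cauchyBound ^ 2), ?_, fun q hq => ?_⟩
  · have := fun i => continuous_cauchyBound_map_eval (hP i)
    fun_prop
  · rw [EuclideanSpace.norm_eq]
    refine Real.sqrt_le_sqrt (Finset.sum_le_sum fun i _ => pow_le_pow_left₀ (norm_nonneg _) ?_ 2)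
    have hi : Polynomial.IsRoot _ _ := hroot i q (subset_closure hq)
    exact (hi.norm_lt_cauchyBound ((hP i).map _).ne_zero).le

/-- The comorphism of `M : S → ℂᵈ`, from polynomials on `ℂᵈ` to the coordinate ring of `S`. -/
noncomputable def linearComorphism (S : Set (EuclideanSpace ℂ (Fin n)))
    (M : Matrix (Fin d) (Fin n) ℂ) :
    MvPolynomial (Fin d) ℂ →ₐ[ℂ] MvPolynomial (Fin n) ℂ ⧸ vanishingIdeal n S :=
  (Ideal.Quotient.mkₐ ℂ (vanishingIdeal n S)).comp (aeval M.toMvPolynomial)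

theorem eval_comp_aeval_toMvPolynomial {σ τ R : Type*} [Fintype σ] [CommSemiring R]
    (M : Matrix τ σ R) (v : σ → R) :
    (eval v).comp (aeval M.toMvPolynomial : MvPolynomial τ R →ₐ[R] MvPolynomial σ R).toRingHom =
      eval (M *ᵥ v) := by
  ext j
  · simp
  · simp [toMvPolynomial_eval_eq_apply]

theorem linearComorphism_injective
    (hS : ∀ f : MvPolynomial (Fin d) ℂ, (∀ v ∈ S, eval (M *ᵥ v.ofLp) f = 0) → f = 0) :
    Function.Injective (linearComorphism S M) := by
  refine (injective_iff_map_eq_zero _).2 fun f hf => hS f fun v hv => ?_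
  rw [← eval_comp_aeval_toMvPolynomial]
  exact Ideal.Quotient.eq_zero_iff_mem.1 hf v hv

theorem IsFiniteAtInfty.isIntegral_linearComorphism (hM : IsFiniteAtInfty V M) {t : ℂ}
    (hS : ∀ v ∈ S, (t, v) ∈ closure (affineCone V)) :
    (linearComorphism S M).toRingHom.IsIntegral := by
  let slice : MvPolynomial (Option (Fin d)) ℂ →ₐ[ℂ] MvPolynomial (Fin d) ℂ :=
    aeval (Option.elim · (C t) X)
  have hslice : ∀ v : EuclideanSpace ℂ (Fin n), (eval (M *ᵥ v.ofLp)).comp slice.toRingHom =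
      eval (conePoint M (t, v)) := by
    intro v
    ext o
    · simp [slice]
    · cases o <;> simp [slice, conePoint]
  have hX : ∀ i, (linearComorphism S M).toRingHom.IsIntegralElem
      (Ideal.Quotient.mk (vanishingIdeal n S) (X i)) := by
    intro i
    obtain ⟨P, hP, hroot⟩ := hM.exists_monic i
    refine ⟨P.map slice.toRingHom, hP.map _, ?_⟩
    have hcomp : (linearComorphism S M).toRingHom = (Ideal.Quotient.mk (vanishingIdeal n S)).comp
      (aeval M.toMvPolynomial).toRingHom := rfl
    rw [hcomp, ← Polynomial.hom_eval₂, Ideal.Quotient.eq_zero_iff_mem]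
    intro v hv
    rw [Polynomial.hom_eval₂, eval_comp_aeval_toMvPolynomial, eval_X, Polynomial.eval₂_map, hslice,
      ← Polynomial.eval_map]
    exact hroot (t, v) (hS v hv)
  intro x
  obtain ⟨G, rfl⟩ := Ideal.Quotient.mkₐ_surjective ℂ _ x
  rw [aeval_unique (Ideal.Quotient.mkₐ ℂ (vanishingIdeal n S))]
  exact isIntegralElem_aeval hX G

theorem IsFiniteAtInfty.algDim_eq (hM : IsFiniteAtInfty V M) {t : ℂ}
    (hS : ∀ v ∈ S, (t, v) ∈ closure (affineCone V))
    (hdense : ∀ f : MvPolynomial (Fin d) ℂ, (∀ v ∈ S, eval (M *ᵥ v.ofLp) f = 0) → f = 0) :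
    algDim n S = d := by
  rw [algDim, ← ringKrullDim_eq_of_isIntegral_of_injective (hM.isIntegral_linearComorphism hS)
    (linearComorphism_injective hdense), ringKrullDim_of_isNoetherianRing,
    ringKrullDim_eq_zero_of_field]
  simp

end FiniteAtInfty

section TangentCone

variable {n d : ℕ} {V : Set (EuclideanSpace ℂ (Fin n))} {M : Matrix (Fin d) (Fin n) ℂ}

theorem mem_closure_affineCone_of_mem {p : EuclideanSpace ℂ (Fin n)} (hp : p ∈ V) :
    (1, p) ∈ closure (affineCone V) :=
  subset_closure ⟨p, hp, (one_smul ℂ p).symm⟩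

theorem mem_closure_affineCone_of_mem_geomTangentConeAtInfty {v : EuclideanSpace ℂ (Fin n)}
    (hv : v ∈ geomTangentConeAtInfty n V) : (0, v) ∈ closure (affineCone V) := by
  obtain ⟨x, t, hx, hinf, hlim⟩ := hv
  have ht : Tendsto t atTop (𝓝 0) := by
    rw [tendsto_zero_iff_norm_tendsto_zero]
    refine (hlim.norm.div_atTop hinf).congr' ?_
    filter_upwards [hinf.eventually_gt_atTop 0] with j hj
    rw [norm_smul, mul_div_cancel_right₀ _ hj.ne']
  exact mem_closure_of_tendsto (ht.prodMk_nhds hlim) (.of_forall fun j => ⟨x j, hx j, rfl⟩)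

theorem zero_mem_geomTangentConeAtInfty (hV : ¬ Bornology.IsBounded V) :
    0 ∈ geomTangentConeAtInfty n V := by
  have hlarge : ∀ j : ℕ, ∃ x ∈ V, (j : ℝ) < ‖x‖ := by
    intro j
    by_contra! h
    exact hV (isBounded_iff_forall_norm_le.2 ⟨j, h⟩)
  choose x hx hnorm using hlarge
  refine ⟨x, 0, hx, tendsto_atTop_mono (fun j => (hnorm j).le) tendsto_natCast_atTop_atTop, ?_⟩
  simpa only [Pi.zero_apply, zero_smul] using tendsto_const_nhds

theorem mem_geomTangentConeAtInfty_of_tendsto {v : EuclideanSpace ℂ (Fin n)} (hv : v ≠ 0)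
    {x : ℕ → EuclideanSpace ℂ (Fin n)} {t : ℕ → ℂ} (hx : ∀ j, x j ∈ V)
    (ht : Tendsto t atTop (𝓝 0)) (hlim : Tendsto (fun j => t j • x j) atTop (𝓝 v)) :
    v ∈ geomTangentConeAtInfty n V := by
  have ht_ne : ∀ᶠ j in atTop, t j ≠ 0 := by
    filter_upwards [hlim.eventually_ne hv] with j hj h
    exact hj (by rw [h, zero_smul])
  have ht_inv : Tendsto (fun j => ‖(t j)⁻¹‖) atTop atTop :=
    tendsto_norm_inv_nhdsNE_zero_atTop.comp (tendsto_nhdsWithin_iff.2 ⟨ht, ht_ne⟩)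
  refine ⟨x, t, hx, (ht_inv.atTop_mul_pos (norm_pos_iff.2 hv) hlim.norm).congr' ?_, hlim⟩
  filter_upwards [ht_ne] with j hj
  rw [← norm_smul, inv_smul_smul₀ hj]

theorem IsFiniteAtInfty.exists_tendsto_subseq (hM : IsFiniteAtInfty V M)
    {q : ℕ → ℂ × EuclideanSpace ℂ (Fin n)} (hq : ∀ j, q j ∈ affineCone V)
    {y : Option (Fin d) → ℂ} (hlim : Tendsto (fun j => conePoint M (q j)) atTop (𝓝 y)) :
    ∃ v, ∃ φ : ℕ → ℕ, StrictMono φ ∧ Tendsto (fun j => (q (φ j)).2) atTop (𝓝 v) := by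
  obtain ⟨b, hb, hnorm⟩ := hM.exists_continuous_norm_le
  obtain ⟨R, hR⟩ := ((hb.tendsto y).comp hlim).bddAbove_range
  have hball : ∀ j, (q j).2 ∈ Metric.closedBall 0 R := fun j =>
    mem_closedBall_zero_iff.2 ((hnorm _ (hq j)).trans (hR ⟨j, rfl⟩))
  obtain ⟨v, -, φ, hφ, hv⟩ := tendsto_subseq_of_bounded Metric.isBounded_closedBall hball
  exact ⟨v, φ, hφ, hv⟩

theorem IsFiniteAtInfty.exists_mem_geomTangentConeAtInfty_mulVec_eq (hM : IsFiniteAtInfty V M)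
    (hV : ∀ w, ∃ p ∈ V, M *ᵥ p.ofLp = w) {w : Fin d → ℂ} (hw : w ≠ 0) :
    ∃ v ∈ geomTangentConeAtInfty n V, M *ᵥ v.ofLp = w := by
  let t : ℕ → ℂ := fun j => 1 / (j + 1)
  have ht : Tendsto t atTop (𝓝 0) := tendsto_one_div_add_atTop_nhds_zero_nat
  choose x hx hMx using fun j => hV ((t j)⁻¹ • w)
  have hMt : ∀ j, M *ᵥ (t j • x j).ofLp = w := fun j => by
    have : t j ≠ 0 := one_div_ne_zero j.cast_add_one_ne_zero
    rw [WithLp.ofLp_smul, mulVec_smul, hMx, smul_inv_smul₀ this]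
  have hpoint : Tendsto (fun j => conePoint M (t j, t j • x j)) atTop (𝓝 (Option.elim · 0 w)) := by
    refine tendsto_pi_nhds.2 fun o => ?_
    cases o with
    | none => exact ht
    | some k => simpa only [conePoint, Option.elim_some, hMt] using tendsto_const_nhds
  obtain ⟨v, φ, hφ, hlim⟩ := hM.exists_tendsto_subseq (fun j => ⟨x j, hx j, rfl⟩) hpoint
  have hMv : M *ᵥ v.ofLp = w := by
    have hcont : Continuous fun v : EuclideanSpace ℂ (Fin n) => M *ᵥ v.ofLp := by fun_prop
    refine tendsto_nhds_unique ((hcont.tendsto v).comp hlim) ?_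
    simpa only [Function.comp_def, hMt] using tendsto_const_nhds
  have hv : v ≠ 0 := by
    rintro rfl
    exact hw (by rw [← hMv, WithLp.ofLp_zero, mulVec_zero])
  exact ⟨v, mem_geomTangentConeAtInfty_of_tendsto hv (fun j => hx (φ j))
    (ht.comp hφ.tendsto_atTop) hlim, hMv⟩

theorem exists_mem_mulVec_eq (hV : ∀ p ∈ zeroLocus ℂ (vanishingIdeal n V), WithLp.toLp 2 p ∈ V)
    (hM : IsFiniteAtInfty V M)
    (hdense : ∀ f : MvPolynomial (Fin d) ℂ, (∀ p ∈ V, eval (M *ᵥ p.ofLp) f = 0) → f = 0)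
    (w : Fin d → ℂ) : ∃ p ∈ V, M *ᵥ p.ofLp = w := by
  obtain ⟨p, hp, hpw⟩ := exists_mem_zeroLocus_eval_eq
    (hM.isIntegral_linearComorphism fun _ => mem_closure_affineCone_of_mem)
    (linearComorphism_injective hdense) w
  refine ⟨_, hV p hp, _root_.funext fun j => ?_⟩
  rw [← hpw j, toMvPolynomial_eval_eq_apply]

theorem eq_zero_of_forall_geomTangentConeAtInfty (hV : ¬ Bornology.IsBounded V)
    (hM : IsFiniteAtInfty V M) (hsurj : ∀ w, ∃ p ∈ V, M *ᵥ p.ofLp = w)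
    {f : MvPolynomial (Fin d) ℂ}
    (hf : ∀ v ∈ geomTangentConeAtInfty n V, eval (M *ᵥ v.ofLp) f = 0) : f = 0 := by
  refine funext fun w => ?_
  obtain rfl | hw := eq_or_ne w 0
  · simpa using hf 0 (zero_mem_geomTangentConeAtInfty hV)
  · obtain ⟨v, hv, rfl⟩ := hM.exists_mem_geomTangentConeAtInfty_mulVec_eq hsurj hw
    rw [hf v hv, map_zero]

theorem toLp_mem_of_mem_zeroLocus_vanishingIdeal {I : Ideal (MvPolynomial (Fin n) ℂ)}
    (hV : V = {z | ∀ f ∈ I, eval (fun i => z i) f = 0}) {p : Fin n → ℂ}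
    (hp : p ∈ zeroLocus ℂ (vanishingIdeal n V)) : WithLp.toLp 2 p ∈ V := by
  rw [hV]
  intro f hf
  refine (aeval_eq_eval p ▸ hp f) fun z hz => ?_
  rw [hV] at hz
  exact hz f hf

end TangentCone

/-- Let `V ⊆ ℂⁿ` be an unbounded complex algebraic set (the common
zero locus of an ideal `I` of `ℂ[x₁, …, xₙ]`).  Then `dim V = dim C_∞(V)`, where
`C_∞(V)` is the geometric tangent cone of `V` at infinity and, for a subset
`S ⊆ ℂⁿ`, `dim S` is the Krull dimension of `ℂ[x₁, …, xₙ]/I(S)` with `I(S)` the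
vanishing ideal of `S`. -/
theorem statement4 (n : ℕ) (hn : 2 ≤ n)
    (I : Ideal (MvPolynomial (Fin n) ℂ))
    (V : Set (EuclideanSpace ℂ (Fin n)))
    (hValg : V = {z | ∀ f ∈ I, MvPolynomial.eval (fun i => z i) f = 0})
    (hVunbdd : ¬ Bornology.IsBounded V) :
    algDim n V = algDim n (geomTangentConeAtInfty n V) := by
  have hne : V.Nonempty :=
    Set.nonempty_iff_ne_empty.2 fun h => hVunbdd (h ▸ Bornology.isBounded_empty)
  obtain ⟨d, M, hM, hdense⟩ := exists_isFiniteAtInfty_dense hne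
  have hsurj : ∀ w, ∃ p ∈ V, M *ᵥ p.ofLp = w :=
    exists_mem_mulVec_eq (fun _ => toLp_mem_of_mem_zeroLocus_vanishingIdeal hValg) hM hdense
  have hdimV : algDim n V = d := hM.algDim_eq (fun _ => mem_closure_affineCone_of_mem) hdense
  have hdimC : algDim n (geomTangentConeAtInfty n V) = d :=
    hM.algDim_eq (fun _ => mem_closure_affineCone_of_mem_geomTangentConeAtInfty)
      fun _ => eq_zero_of_forall_geomTangentConeAtInfty hVunbdd hM hsurj
  rw [hdimV, hdimC]
end
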